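/- Let G be an n-vertex cubic graph with girth at least 9 such that every independent set in G has size less than 0.456n. If C1, C2, C4 are pairwise disjoint vertex sets such that C_i is i-independent for i ∈ {1,2,4}, then |C1| + |C2| + |C4| ≤ 0.7174n. -/

import Mathlib

open SimpleGraph Finset

/-- A set `S` is `i`-independent in `G` if any two distinct vertices of `S`
are at distance at least `i + 1`. -/
def pIndep {V : Type*} (G : SimpleGraph V) (i : ℕ) (S : Finset V) : Prop :=
  ∀ x ∈ S, ∀ y ∈ S, x ≠ y → ((i + 1 : ℕ) : ℕ∞) ≤ G.edist x y

/-!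
Let `x`, `y`, `z` be the sizes of `C₁`, `C₂`, `C₄`, let `s = x + y + z`, and let `e` be the number
of edges between these three classes in a `d`-regular graph on `n` vertices. As the classes span no
inner edges, their union emits `d s - 2 e` edges, which its complement has to absorb:
`2 d s ≤ d n + 2 e`. There are two bounds on `e`.

* `e ≤ x + d z`: a vertex of `C₁` has at most one neighbour in `C₂`, and the other edges meet `C₄`.
* `e ≤ x + y`: vertices of `C₁` have at most one neighbour in `C₂` and one in `C₄`, vertices of `C₂`
  at most one in `C₄`. Let every vertex pay for one such edge; a vertex of `C₁` with neighbours in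
  both classes passes its second edge on to its neighbour in `C₂`. If a vertex of `C₂` were charged
  twice, there would be a walk of length `3` or `4` between vertices of `C₄`; these then coincide,
  closing a cycle of length `3` or `4`.

Weighting the second bound by `d` yields `(d + 1) e ≤ d s + x`, so `2 d² s ≤ d (d + 1) n + 2 x`.
-/

section Interedges

variable {V : Type*} (G : SimpleGraph V) [DecidableRel G.Adj]

lemma card_interedges_comm (A B : Finset V) : #(G.interedges A B) = #(G.interedges B A) :=
  have := G.symm
  Rel.card_interedges_comm A B

lemma card_interedges_univ_right [Fintype V] (A : Finset V) :
    #(G.interedges A univ) = ∑ a ∈ A, G.degree a := by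
  rw [interedges_def, card_filter, sum_product]
  refine sum_congr rfl fun a _ ↦ ?_
  rw [← G.card_neighborFinset_eq_degree, G.neighborFinset_eq_filter, card_filter]

lemma card_interedges_le_sum_degree_left [Fintype V] (A B : Finset V) :
    #(G.interedges A B) ≤ ∑ a ∈ A, G.degree a :=
  (card_le_card (G.interedges_mono subset_rfl (subset_univ B))).trans_eq
    (card_interedges_univ_right G A)

lemma card_interedges_le_sum_degree_right [Fintype V] (A B : Finset V) :
    #(G.interedges A B) ≤ ∑ b ∈ B, G.degree b :=
  (card_interedges_comm G A B).trans_le (card_interedges_le_sum_degree_left G B A)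

lemma card_interedges_union_left [DecidableEq V] {A B : Finset V} (h : Disjoint A B)
    (C : Finset V) :
    #(G.interedges (A ∪ B) C) = #(G.interedges A C) + #(G.interedges B C) := by
  rw [← card_union_of_disjoint (G.interedges_disjoint_left h C)]
  congr 1
  ext ⟨a, c⟩
  simp only [mem_union, mk_mem_interedges_iff]
  tauto

lemma card_interedges_union_right [DecidableEq V] (A : Finset V) {B C : Finset V}
    (h : Disjoint B C) :
    #(G.interedges A (B ∪ C)) = #(G.interedges A B) + #(G.interedges A C) := by
  simp only [card_interedges_comm G A, card_interedges_union_left G h]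

lemma card_interedges_union_self [DecidableEq V] {A B : Finset V} (h : Disjoint A B) :
    #(G.interedges (A ∪ B) (A ∪ B)) =
      #(G.interedges A A) + #(G.interedges B B) + 2 * #(G.interedges A B) := by
  rw [card_interedges_union_left G h, card_interedges_union_right G A h,
    card_interedges_union_right G B h, card_interedges_comm G B A]
  ring

lemma two_mul_sum_degree_le_add_card_interedges [Fintype V] (S : Finset V) :
    2 * ∑ v ∈ S, G.degree v ≤ ∑ v, G.degree v + #(G.interedges S S) := by
  classical
  have hsplit : ∑ v ∈ S, G.degree v = #(G.interedges S S) + #(G.interedges S Sᶜ) := by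
    rw [← card_interedges_union_right G S disjoint_compl_right, union_compl,
      card_interedges_univ_right]
  have hcompl := card_interedges_le_sum_degree_right G S Sᶜ
  have htotal := sum_add_sum_compl S fun v ↦ G.degree v
  omega

end Interedges

section Girth

variable {V : Type*} {G : SimpleGraph V}

lemma cliqueFree_three_of_four_le_egirth (hg : 4 ≤ G.egirth) : G.CliqueFree 3 := by
  intro t ht
  obtain ⟨a, w, hw, hlen⟩ := is3Clique_iff_exists_cycle_length_three.mp ⟨t, ht⟩
  have h := hg.trans (egirth_le_length hw)
  rw [hlen] at h
  norm_num at h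

lemma commonNeighbors_subsingleton_of_five_le_egirth (hg : 5 ≤ G.egirth) {v w : V}
    (hvw : v ≠ w) : (G.commonNeighbors v w).Subsingleton := by
  rintro a ⟨hva, hwa⟩ b ⟨hvb, hwb⟩
  rw [mem_neighborSet] at hva hwa hvb hwb
  by_contra hab
  have hcycle : (Walk.cons hva (.cons hwa.symm (.cons hwb (.cons hvb.symm .nil)))).IsCycle := by
    have := hva.ne
    have := hwa.ne
    have := hvb.ne
    have := hwb.ne
    simp only [Walk.cons_isCycle_iff, Walk.cons_isPath_iff, Walk.isPath_iff_nil, Walk.nil_nil,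
      Walk.support_cons, Walk.support_nil, Walk.edges_cons, Walk.edges_nil, List.mem_cons,
      List.not_mem_nil, or_false, true_and, not_or, Sym2.eq, Sym2.rel_iff', Prod.mk.injEq,
      Prod.swap_prod_mk, and_true, not_and]
    grind
  have h := hg.trans (egirth_le_length hcycle)
  norm_num at h

end Girth

section Indep

variable {V : Type*} {G : SimpleGraph V} {i : ℕ} {S : Finset V}

lemma pIndep.of_le {j : ℕ} (hS : pIndep G j S) (hij : i ≤ j) : pIndep G i S :=
  fun x hx y hy hxy ↦ le_trans (by gcongr) (hS x hx y hy hxy)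

lemma pIndep.eq_of_walk (hS : pIndep G i S) {x y : V} (hx : x ∈ S) (hy : y ∈ S)
    (w : G.Walk x y) (hw : w.length ≤ i) : x = y := by
  by_contra hne
  have h : i + 1 ≤ w.length := mod_cast (hS x hx y hy hne).trans w.edist_le
  omega

lemma pIndep.not_adj (hS : pIndep G 1 S) {x y : V} (hx : x ∈ S) (hy : y ∈ S) :
    ¬ G.Adj x y :=
  fun h ↦ h.ne (hS.eq_of_walk hx hy h.toWalk le_rfl)

lemma pIndep.eq_of_adj (hS : pIndep G 2 S) {a x y : V} (hx : x ∈ S) (hy : y ∈ S)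
    (hax : G.Adj a x) (hay : G.Adj a y) : x = y :=
  hS.eq_of_walk hx hy (.cons hax.symm (.cons hay .nil)) le_rfl

variable [DecidableRel G.Adj]

lemma pIndep.card_interedges_self (hS : pIndep G 1 S) : #(G.interedges S S) = 0 := by
  refine card_eq_zero.mpr (filter_eq_empty_iff.mpr fun e he ↦ ?_)
  exact hS.not_adj (mem_product.mp he).1 (mem_product.mp he).2

variable (G) in
/-- The set of vertices of `A` with a neighbour in `B`. For a `2`-independent set `B` its size is
the number of edges between `A` and `B`. -/
def contactSet (A B : Finset V) : Finset V :=
  {a ∈ A | ∃ b ∈ B, G.Adj a b}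

lemma contactSet_subset (A B : Finset V) : contactSet G A B ⊆ A :=
  filter_subset _ _

lemma pIndep.card_interedges_le_card_contactSet (hS : pIndep G 2 S) (A : Finset V) :
    #(G.interedges A S) ≤ #(contactSet G A S) := by
  refine card_le_card_of_injOn Prod.fst ?_ ?_
  · rintro ⟨a, b⟩ hab
    obtain ⟨ha, hb, hadj⟩ := G.mk_mem_interedges_iff.mp hab
    exact mem_filter.mpr ⟨ha, b, hb, hadj⟩
  · rintro ⟨a, b⟩ hab ⟨a', b'⟩ hab' (rfl : a = a')
    obtain ⟨-, hb, hadj⟩ := G.mk_mem_interedges_iff.mp hab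
    obtain ⟨-, hb', hadj'⟩ := G.mk_mem_interedges_iff.mp hab'
    rw [hS.eq_of_adj hb hb' hadj hadj']

variable {A B C : Finset V}

lemma card_contactSet_inter_add_le [DecidableEq V] (hg : 5 ≤ G.egirth) (hBC : Disjoint B C)
    (hC : pIndep G 4 C) :
    #(contactSet G A B ∩ contactSet G A C) + #(contactSet G B C) ≤ #B := by
  rw [← card_sdiff_add_card_eq_card (contactSet_subset (G := G) B C), add_le_add_iff_right]
  refine card_le_card_of_forall_subsingleton G.Adj ?_ ?_
  · intro a ha
    simp only [contactSet, mem_inter, mem_filter] at ha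
    obtain ⟨⟨-, b, hb, hab⟩, -, c, hc, hac⟩ := ha
    refine ⟨b, mem_sdiff.mpr ⟨hb, fun hbC ↦ ?_⟩, hab⟩
    obtain ⟨-, c', hc', hbc'⟩ := mem_filter.mp hbC
    obtain rfl : c = c' :=
      hC.eq_of_walk hc hc' (.cons hac.symm (.cons hab (.cons hbc' .nil))) (by simp)
    exact cliqueFree_three_of_four_le_egirth (le_trans (by norm_num) hg) {a, b, c}
      (is3Clique_triple_iff.mpr ⟨hab, hac, hbc'⟩)
  · rintro b hb a ⟨ha, hab⟩ a' ⟨ha', hab'⟩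
    obtain ⟨-, c, hc, hac⟩ := mem_filter.mp (mem_inter.mp ha).2
    obtain ⟨-, c', hc', hac'⟩ := mem_filter.mp (mem_inter.mp ha').2
    obtain rfl : c = c' := hC.eq_of_walk hc hc'
      (.cons hac.symm (.cons hab (.cons hab'.symm (.cons hac' .nil)))) (by simp)
    have hbc : b ≠ c := disjoint_iff_ne.mp hBC b (mem_sdiff.mp hb).1 c hc
    exact commonNeighbors_subsingleton_of_five_le_egirth hg hbc ⟨hab.symm, hac.symm⟩
      ⟨hab'.symm, hac'.symm⟩

lemma card_interedges_add_le_card_add_card (hg : 5 ≤ G.egirth) (hBC : Disjoint B C)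
    (hB : pIndep G 2 B) (hC : pIndep G 4 C) :
    #(G.interedges A B) + #(G.interedges A C) + #(G.interedges B C) ≤ #A + #B := by
  classical
  calc
    #(G.interedges A B) + #(G.interedges A C) + #(G.interedges B C)
    _ ≤ #(contactSet G A B) + #(contactSet G A C) + #(contactSet G B C) := by
      gcongr
      · exact hB.card_interedges_le_card_contactSet A
      · exact (hC.of_le (by norm_num)).card_interedges_le_card_contactSet A
      · exact (hC.of_le (by norm_num)).card_interedges_le_card_contactSet B
    _ = #(contactSet G A B ∪ contactSet G A C) +
          (#(contactSet G A B ∩ contactSet G A C) + #(contactSet G B C)) := by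
      rw [← card_union_add_card_inter, add_assoc]
    _ ≤ #A + #B := by
      gcongr
      · exact union_subset (contactSet_subset A B) (contactSet_subset A C)
      · exact card_contactSet_inter_add_le hg hBC hC

lemma card_interedges_add_le_card_add_sum_degree [Fintype V] (hAB : Disjoint A B)
    (hB : pIndep G 2 B) (C : Finset V) :
    #(G.interedges A B) + #(G.interedges A C) + #(G.interedges B C) ≤
      #A + ∑ c ∈ C, G.degree c := by
  classical
  rw [add_assoc, ← card_interedges_union_left G hAB]
  gcongr
  · exact (hB.card_interedges_le_card_contactSet A).trans
      (card_le_card (contactSet_subset A B))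
  · exact card_interedges_le_sum_degree_right G (A ∪ B) C

end Indep

theorem stmt7_general {V : Type*} [Fintype V] (G : SimpleGraph V) [DecidableRel G.Adj] {d : ℕ}
    (hreg : G.IsRegularOfDegree d) (hg : 5 ≤ G.egirth)
    (C1 C2 C4 : Finset V)
    (h12 : Disjoint C1 C2) (h14 : Disjoint C1 C4) (h24 : Disjoint C2 C4)
    (hC1 : pIndep G 1 C1) (hC2 : pIndep G 2 C2) (hC4 : pIndep G 4 C4) :
    2 * d ^ 2 * (#C1 + #C2 + #C4) ≤ d * (d + 1) * Fintype.card V + 2 * #C1 := by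
  classical
  have hdisj : Disjoint (C1 ∪ C2) C4 := disjoint_union_left.mpr ⟨h14, h24⟩
  have hdeg (S : Finset V) : ∑ v ∈ S, G.degree v = d * #S := by
    simp only [hreg.degree_eq, sum_const, smul_eq_mul, mul_comm]
  set e := #(G.interedges C1 C2) + #(G.interedges C1 C4) + #(G.interedges C2 C4)
  have hemit : 2 * (d * (#C1 + #C2 + #C4)) ≤ d * Fintype.card V + 2 * e := by
    have h := two_mul_sum_degree_le_add_card_interedges G (C1 ∪ C2 ∪ C4)
    rw [hdeg, hdeg, card_univ, card_union_of_disjoint hdisj, card_union_of_disjoint h12,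
      card_interedges_union_self G hdisj, card_interedges_union_self G h12,
      card_interedges_union_left G h12, hC1.card_interedges_self,
      (hC2.of_le one_le_two).card_interedges_self,
      (hC4.of_le (by norm_num)).card_interedges_self] at h
    omega
  have hcharge : e ≤ #C1 + #C2 := card_interedges_add_le_card_add_card hg h24 hC2 hC4
  have hdegree : e ≤ #C1 + d * #C4 :=
    hdeg C4 ▸ card_interedges_add_le_card_add_sum_degree h12 hC2 C4
  linarith [Nat.mul_le_mul_left (d + 1) hemit, Nat.mul_le_mul_left d hcharge]

theorem stmt7 {V : Type*} [Fintype V] [DecidableEq V] (G : SimpleGraph V)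
    [DecidableRel G.Adj] (hreg : G.IsRegularOfDegree 3)
    (hg : (9 : ℕ∞) ≤ G.egirth)
    (hα : ∀ I : Finset V, (∀ x ∈ I, ∀ y ∈ I, ¬ G.Adj x y) →
      (I.card : ℝ) < 0.456 * Fintype.card V)
    (C1 C2 C4 : Finset V)
    (h12 : Disjoint C1 C2) (h14 : Disjoint C1 C4) (h24 : Disjoint C2 C4)
    (hC1 : pIndep G 1 C1) (hC2 : pIndep G 2 C2) (hC4 : pIndep G 4 C4) :
    (C1.card : ℝ) + C2.card + C4.card ≤ 0.7174 * Fintype.card V := by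
  have h : (2 * 3 ^ 2 * (#C1 + #C2 + #C4) : ℝ) ≤ 3 * (3 + 1) * Fintype.card V + 2 * #C1 :=
    mod_cast stmt7_general G hreg (le_trans (by norm_num) hg) C1 C2 C4 h12 h14 h24 hC1 hC2 hC4
  linarith [hα C1 fun x hx y hy ↦ hC1.not_adj hx hy]
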